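/- arXiv:1306.3478 — 12 statements merged into one kernel-verified Lean document; each statement's English description precedes it below -/
import Mathlib

section
/- Let h : V → V be an 𝔽_p-linear map such that the graph {(u, h(u)) : u ∈ V} is a totally isotropic subspace of W = V ⊕ V with respect to the form ⟨(u,v),(u',v')⟩ = tr(u·v' − v·u'). Then for every v ∈ V the vector b_{h,v} = Σ_{w∈V} ω^{tr((1/2)w·h(w) + v·w)} e_w satisfies D_{u,h(u)}(b_{h,v}) = ω^{−tr((1/2)u·h(u) + v·u)} b_{h,v} for all u ∈ V; in particular b_{h,v} is a common eigenvector of the matrices D_{u,h(u)}, u ∈ V. -/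
open Matrix

/-- Exponents in `ZMod n` of an `n`-th root of unity add. -/
lemma pow_zmod_val_add {M : Type*} [Monoid M] {n : ℕ} [NeZero n] {ω : M} (hω : ω ^ n = 1)
    (x y : ZMod n) : ω ^ (x + y).val = ω ^ x.val * ω ^ y.val := by
  rw [ZMod.val_add, ← pow_add, ← pow_eq_pow_mod _ hω]

/-- An additive map between fields in which `2 ≠ 0` kills `x / 2` if it kills `x`. -/
lemma map_inv_two_mul_eq_zero {K F G : Type*} [Field K] [Field F] [FunLike G F K]
    [AddMonoidHomClass G F K] (f : G) (hK : (2 : K) ≠ 0) (hF : (2 : F) ≠ 0) {x : F}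
    (hx : f x = 0) : f (2⁻¹ * x) = 0 := by
  have hsum : 2⁻¹ * x + 2⁻¹ * x = x := by field_simp; ring
  have hdouble : (2 : K) * f (2⁻¹ * x) = 0 := by
    rw [two_mul, ← map_add, hsum, hx]
  exact (mul_eq_zero.mp hdouble).resolve_left hK

/-- **Lemma.** Let `F = 𝔽_q` be a finite field of odd order `q = p^r`, `V = F^k`,
`tr : F → 𝔽_p` the absolute trace, and `ω ∈ ℂ` a primitive `p`-th root of unity.
Let `h : V → V` be an `𝔽_p`-linear map whose graph is a totally isotropic subspace of
`V ⊕ V` for the form `⟨(u,v),(u',v')⟩ = tr (u ⬝ᵥ v' - v ⬝ᵥ u')`.  Then for every `v ∈ V`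
the vector `b_{h,v} = ∑_w ω^{tr(2⁻¹ w·h(w) + v·w)} e_w` satisfies
`D_{u,h(u)} b_{h,v} = ω^{-tr(2⁻¹ u·h(u) + v·u)} • b_{h,v}` for all `u ∈ V`; in particular
`b_{h,v}` is a common eigenvector of the generalized Pauli matrices `D_{u,h(u)}`, `u ∈ V`. -/
theorem pauli_eigenvector_of_isotropic_graph
    (p r : ℕ) [Fact p.Prime] (hp : Odd p)
    (F : Type*) [Field F] [Fintype F] [DecidableEq F] [CharP F p] [Algebra (ZMod p) F]
    (hcard : Fintype.card F = p ^ r)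
    (ω : ℂ) (hω : IsPrimitiveRoot ω p)
    (k : ℕ) (h : (Fin k → F) → (Fin k → F))
    -- `h` is `𝔽_p`-linear
    (hlin : IsLinearMap (ZMod p) h)
    -- the graph of `h` is a totally isotropic subspace
    (hsub : ∃ S : Submodule (ZMod p) ((Fin k → F) × (Fin k → F)),
      (S : Set ((Fin k → F) × (Fin k → F))) = {x | x.2 = h x.1})
    (hiso : ∀ u w : Fin k → F,
      Algebra.trace (ZMod p) F (u ⬝ᵥ h w - h u ⬝ᵥ w) = 0)
    -- the generalized Pauli matrices `D_{u,v} = X(u) Z(v)`, `D_{u,v} e_w = ω^{tr(v·w)} e_{u+w}`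
    (D : (Fin k → F) → (Fin k → F) → Matrix (Fin k → F) (Fin k → F) ℂ)
    (hD : ∀ u v w' w, D u v w' w =
      if w' = u + w then ω ^ (Algebra.trace (ZMod p) F (v ⬝ᵥ w)).val else 0)
    -- the vectors `b_{h,v}`
    (b : (Fin k → F) → ((Fin k → F) → ℂ))
    (hb : ∀ v w, b v w =
      ω ^ (Algebra.trace (ZMod p) F ((2⁻¹ : F) * (w ⬝ᵥ h w) + v ⬝ᵥ w)).val) :
    ∀ u v : Fin k → F,
      Matrix.mulVec (D u (h u)) (b v) =
        ω ^ (-(Algebra.trace (ZMod p) F ((2⁻¹ : F) * (u ⬝ᵥ h u) + v ⬝ᵥ u))).val • b v := by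
  intro u v
  have hp2 : p ≠ 2 := by rintro rfl; exact absurd hp (by decide)
  have hK : (2 : ZMod p) ≠ 0 := Ring.two_ne_zero (by rwa [ZMod.ringChar_zmod_n])
  have hF : (2 : F) ≠ 0 := Ring.two_ne_zero (by rwa [ringChar.eq F p])
  ext w'
  obtain ⟨w, rfl⟩ : ∃ w, w' = u + w := ⟨w' - u, by abel⟩
  have hmul : Matrix.mulVec (D u (h u)) (b v) (u + w) =
      ω ^ (Algebra.trace (ZMod p) F (h u ⬝ᵥ w)).val * b v w := by
    simp [Matrix.mulVec, dotProduct, hD]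
  rw [hmul, Pi.smul_apply, smul_eq_mul, hb, hb, ← pow_zmod_val_add hω.pow_eq_one,
    ← pow_zmod_val_add hω.pow_eq_one]
  congr 2
  have hhalf := map_inv_two_mul_eq_zero (Algebra.trace (ZMod p) F) hK hF (hiso u w)
  rw [← map_neg, ← map_add, ← map_add, ← sub_eq_zero, ← neg_eq_zero, ← map_sub, ← map_neg,
    ← hhalf]
  congr 1
  rw [hlin.map_add, add_dotProduct, dotProduct_add, dotProduct_add, dotProduct_add,
    dotProduct_comm w (h u)]
  field_simp
  ring
end

section
/- Let a_{ij} ∈ F for 0 ≤ i ≤ j ≤ r−1 and define x ∘ y = (1/2) Σ_{i≤j} a_{ij}^{p^{r−i}} x^{p^{j−i}} y^{p^{r−i}} + (1/2) Σ_{i≤j} a_{ij}^{p^{r−j}} x^{p^{r+i−j}} y^{p^{r−j}} (exponents of p read modulo r, i.e. x^{p^r} = x). Then tr(x·(z ∘ y)) = tr(z·(x ∘ y)) for all x, y, z ∈ F; equivalently, every subspace {(x, x∘y) : x ∈ F} of F ⊕ F is totally isotropic for the alternating form ⟨(u,v),(u',v')⟩ = tr(uv' − vu'). -/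
open scoped BigOperators

/-- The absolute trace is invariant under powers of Frobenius. -/
theorem trace_pow_prime_pow (p : ℕ) [Fact p.Prime] {F : Type*} [Field F] [Finite F]
    [Algebra (ZMod p) F] (n : ℕ) (x : F) :
    Algebra.trace (ZMod p) F (x ^ p ^ n) = Algebra.trace (ZMod p) F x := by
  induction n generalizing x with
  | zero => simp
  | succ n ih =>
    rw [pow_succ, pow_mul, ← ih x]
    have h := Algebra.trace_eq_of_algEquiv
      (FiniteField.frobeniusAlgEquivOfAlgebraic (ZMod p) F) (x ^ p ^ n)
    simpa [ZMod.card] using h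

/-- The two families of monomials in the symplectic multiplication are adjoint to one another. -/
theorem trace_mul_monomial_adjoint (p r : ℕ) [Fact p.Prime] {F : Type*} [Field F] [Fintype F]
    [Algebra (ZMod p) F] (hcard : Fintype.card F = p ^ r) {i j : ℕ} (hij : i ≤ j) (hj : j < r)
    (a x y z : F) :
    Algebra.trace (ZMod p) F (x * (a ^ p ^ (r - i) * z ^ p ^ (j - i) * y ^ p ^ (r - i))) =
      Algebra.trace (ZMod p) F
        (z * (a ^ p ^ (r - j) * x ^ p ^ (r + i - j) * y ^ p ^ (r - j))) := by
  have hF (t : F) : t ^ p ^ r = t := hcard ▸ FiniteField.pow_card t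
  rw [← trace_pow_prime_pow p i, ← trace_pow_prime_pow p j (z * _)]
  have hxi : x ^ p ^ (r + i) = x ^ p ^ i := by rw [pow_add, pow_mul, hF]
  simp only [mul_pow, ← pow_mul, ← pow_add]
  rw [show r - i + i = r by omega, show j - i + i = j by omega,
    show r - j + j = r by omega, show r + i - j + j = r + i by omega, hxi, hF, hF]
  congr 1
  ring

/-- **Proposition.** Let `F = 𝔽_q`, `q = p^r` odd, with coefficients `a i j ∈ F` for
`0 ≤ i ≤ j ≤ r - 1`, and let `∘` be the symplectic presemifield multiplication obtained by
Knuth's cubical array method from the commutative presemifield multiplication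
`x * y = 2⁻¹ ∑_{i≤j} a i j (x^{p^i} y^{p^j} + x^{p^j} y^{p^i})`, namely
`x ∘ y = 2⁻¹ ∑_{i≤j} a i j^{p^{r-i}} x^{p^{j-i}} y^{p^{r-i}}
       + 2⁻¹ ∑_{i≤j} a i j^{p^{r-j}} x^{p^{r+i-j}} y^{p^{r-j}}`
(exponents of `p` read modulo `r`, which is automatic since `x^{p^r} = x` in `F`).
Then `tr (x * (z ∘ y)) = tr (z * (x ∘ y))` for all `x y z ∈ F`; equivalently, every
subspace `{(x, x ∘ y) : x ∈ F}` of `F ⊕ F` is totally isotropic for the alternating form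
`⟨(u,v),(u',v')⟩ = tr (u v' - v u')`. -/
theorem knuth_symplectic_mul_self_adjoint
    (p r : ℕ) [Fact p.Prime] (hp : Odd p) (hr : 0 < r)
    (F : Type*) [Field F] [Fintype F] [CharP F p] [Algebra (ZMod p) F]
    (hcard : Fintype.card F = p ^ r)
    (a : Fin r → Fin r → F)
    (circ : F → F → F)
    (hcirc : ∀ x y : F, circ x y =
      (2⁻¹ : F) * (∑ i : Fin r, ∑ j : Fin r, if i ≤ j then
          a i j ^ p ^ (r - (i : ℕ)) * x ^ p ^ ((j : ℕ) - (i : ℕ)) * y ^ p ^ (r - (i : ℕ))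
        else 0) +
      (2⁻¹ : F) * (∑ i : Fin r, ∑ j : Fin r, if i ≤ j then
          a i j ^ p ^ (r - (j : ℕ)) * x ^ p ^ (r + (i : ℕ) - (j : ℕ)) * y ^ p ^ (r - (j : ℕ))
        else 0)) :
    (∀ x y z : F,
      Algebra.trace (ZMod p) F (x * circ z y) = Algebra.trace (ZMod p) F (z * circ x y)) ∧
    (∀ y x z : F,
      Algebra.trace (ZMod p) F (x * circ z y - z * circ x y) = 0) := by
  have hhalf (t : F) : Algebra.trace (ZMod p) F (2⁻¹ * t) =
      2⁻¹ * Algebra.trace (ZMod p) F t := by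
    have h : (2⁻¹ : F) * t = (2⁻¹ : ZMod p) • t := by
      rw [Algebra.smul_def, map_inv₀, map_ofNat]
    rw [h, map_smul, smul_eq_mul]
  have hadj (x y z : F) : Algebra.trace (ZMod p) F (x * ∑ i : Fin r, ∑ j : Fin r, if i ≤ j then
          a i j ^ p ^ (r - (i : ℕ)) * z ^ p ^ ((j : ℕ) - (i : ℕ)) * y ^ p ^ (r - (i : ℕ))
        else 0) = Algebra.trace (ZMod p) F (z * ∑ i : Fin r, ∑ j : Fin r, if i ≤ j then
          a i j ^ p ^ (r - (j : ℕ)) * x ^ p ^ (r + (i : ℕ) - (j : ℕ)) * y ^ p ^ (r - (j : ℕ))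
        else 0) := by
    simp only [Finset.mul_sum, map_sum]
    refine Finset.sum_congr rfl fun i _ => Finset.sum_congr rfl fun j _ => ?_
    split_ifs with hij
    · exact trace_mul_monomial_adjoint p r hcard hij j.isLt _ _ _ _
    · simp
  have hself (x y z : F) :
      Algebra.trace (ZMod p) F (x * circ z y) = Algebra.trace (ZMod p) F (z * circ x y) := by
    rw [hcirc, hcirc, mul_add, mul_add, map_add, map_add]
    simp only [mul_left_comm _ (2⁻¹ : F), hhalf]
    rw [hadj x y z, hadj z y x, add_comm]
  exact ⟨hself, fun y x z => by rw [map_sub, hself x y z, sub_self]⟩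
end

section
/- Let Σ be the BKLA symplectic spread of W = F ⊕ F consisting of the subspace {(0,y) : y ∈ F} and the subspaces W_m = {(x, m x^{ρ^{-1}} + m^ρ x^ρ) : x ∈ F} for m ∈ F, and let G = {σ_s : s ∈ F*} where σ_s(v,w) = (sv, s^{-1}w). Then Σ is G-invariant and G has exactly four orbits on Σ: the singleton {W_0} = {{(x,0) : x ∈ F}}; the singleton {{(0,y) : y ∈ F}}; the set of subspaces W_m with m a nonzero nonsquare of F; and the set of subspaces W_m with m a nonzero square of F. Moreover σ_s maps W_m to W_{s^{−1−ρ^{−1}} m}. -/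
/-- In a finite field of odd characteristic, nonzero `a` and `b` are both squares or both
nonsquares iff `a * b` is a square. -/
lemma FiniteField.isSquare_mul_iff_of_ne_zero {F : Type*} [Field F] [Fintype F]
    (hF : ringChar F ≠ 2) {a b : F} (ha : a ≠ 0) (hb : b ≠ 0) :
    IsSquare (a * b) ↔ (IsSquare a ↔ IsSquare b) := by
  have hne : (-1 : F) ≠ 1 := Ring.neg_one_ne_one_of_char_ne_two hF
  rw [FiniteField.isSquare_iff hF ha, FiniteField.isSquare_iff hF hb,
    FiniteField.isSquare_iff hF (mul_ne_zero ha hb), mul_pow]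
  rcases FiniteField.pow_dichotomy hF ha with h | h <;>
    rcases FiniteField.pow_dichotomy hF hb with h' | h' <;> simp [h, h', hne]

/-- A field automorphism preserves squares, so `s * τ s` is always a square. -/
lemma FiniteField.isSquare_mul_map {F : Type*} [Field F] [Fintype F]
    (hF : ringChar F ≠ 2) (τ : F ≃+* F) {s : F} (hs : s ≠ 0) : IsSquare (s * τ s) := by
  rw [FiniteField.isSquare_mul_iff_of_ne_zero hF hs (by simpa using hs)]
  exact ⟨fun h => h.map τ, fun h => by simpa using h.map τ.symm⟩

/-- If `τ x ≠ -x` for all nonzero `x`, then the map `s ↦ s * τ s` on the units of a finite field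
of odd characteristic has the same image as the squaring map: both have kernel `{1, -1}`. -/
lemma FiniteField.exists_eq_mul_map_of_isSquare {F : Type*} [Field F] [Fintype F]
    (hF : ringChar F ≠ 2) (τ : F ≃+* F) (hτ : ∀ x : F, x ≠ 0 → τ x ≠ -x)
    {u : F} (hu : u ≠ 0) (hsq : IsSquare u) : ∃ s : F, s ≠ 0 ∧ u = s * τ s := by
  let f : Fˣ →* Fˣ := MonoidHom.id Fˣ * Units.map (τ : F →* F)
  let g : Fˣ →* Fˣ := powMonoidHom 2
  have hf (s : Fˣ) : (f s : F) = s * τ s := rfl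
  have hg (s : Fˣ) : (g s : F) = s ^ 2 := rfl
  have hker : f.ker = g.ker := by
    ext s
    rw [MonoidHom.mem_ker, MonoidHom.mem_ker, Units.ext_iff, Units.ext_iff, hf, hg, Units.val_one]
    have hs : (s : F) ≠ 0 := s.ne_zero
    constructor
    · intro h
      have hmap : τ (s : F) = (s : F)⁻¹ := eq_inv_of_mul_eq_one_right h
      by_contra hne
      refine hτ ((s : F) - (s : F)⁻¹) (fun h0 => hne ?_) (by simp [hmap])
      rw [sub_eq_zero] at h0
      rw [sq]
      nth_rewrite 2 [h0]
      exact mul_inv_cancel₀ hs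
    · intro h
      rcases eq_or_eq_neg_of_sq_eq_sq (s : F) 1 (by rw [h, one_pow]) with h | h <;> simp [h]
  have hle : f.range ≤ g.range := by
    rintro _ ⟨s, rfl⟩
    obtain ⟨c, hc⟩ := FiniteField.isSquare_mul_map hF τ s.ne_zero
    have hc0 : c ≠ 0 := by
      rintro rfl
      exact (f s).ne_zero (by rw [hf, hc, mul_zero])
    exact ⟨Units.mk0 c hc0, Units.ext (by rw [hg, hf, hc, Units.val_mk0, sq])⟩
  have hcard : Nat.card f.range = Nat.card g.range := by
    rw [← Subgroup.index_ker, ← Subgroup.index_ker, hker]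
  have hrange : f.range = g.range := Subgroup.eq_of_le_of_card_ge hle hcard.ge
  obtain ⟨c, rfl⟩ := hsq
  have hc0 : c ≠ 0 := left_ne_zero_of_mul hu
  have hmem : g (Units.mk0 c hc0) ∈ f.range := hrange ▸ ⟨_, rfl⟩
  obtain ⟨s, hs⟩ := hmem
  refine ⟨s, s.ne_zero, ?_⟩
  rw [← hf, hs, hg, Units.val_mk0, sq]

lemma isSquare_iff_exists_ne_zero_sq {F : Type*} [Field F] {m : F} (hm : m ≠ 0) :
    IsSquare m ↔ ∃ c : F, c ≠ 0 ∧ m = c ^ 2 := by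
  rw [isSquare_iff_exists_sq]
  exact ⟨fun ⟨c, hc⟩ => ⟨c, fun h0 => hm (by simp [hc, h0]), hc⟩, fun ⟨c, _, hc⟩ => ⟨c, hc⟩⟩

/-- **Lemma.** Let `F = 𝔽_q` be a finite field of odd order and `ρ` a nontrivial field
automorphism of `F` with `-1 ∉ (F*)^{ρ-1}` (i.e. `ρ x ≠ -x` for all `x ≠ 0`).  Consider
the BKLA symplectic spread of `W = F ⊕ F` consisting of `Y = {(0,y)}` and the subspaces
`W_m = {(x, m x^{ρ⁻¹} + m^ρ x^ρ) : x ∈ F}`, `m ∈ F`, and the group `G = {σ_s : s ∈ F*}`,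
`σ_s (v, w) = (s v, s⁻¹ w)`.  Then the spread is `G`-invariant, `σ_s` maps `W_m` to
`W_{s^{-1-ρ⁻¹} m}`, and `G` has exactly four orbits on the spread: `{W_0}` (i.e.
`{(x,0)}`), `{Y}`, the subspaces `W_m` with `m` a nonzero nonsquare, and the subspaces
`W_m` with `m` a nonzero square. -/
theorem bkla_spread_four_orbits
    (F : Type*) [Field F] [Fintype F] (hodd : Odd (Fintype.card F))
    (ρ : F ≃+* F) (hρ : ρ ≠ RingEquiv.refl F)
    (hm1 : ∀ x : F, x ≠ 0 → ρ x ≠ -x)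
    (Wm : F → Set (F × F))
    (hWm : ∀ m, Wm m = {w : F × F | w.2 = m * ρ.symm w.1 + ρ m * ρ w.1})
    (Y : Set (F × F)) (hY : Y = {w : F × F | w.1 = 0})
    (σ : F → F × F → F × F) (hσ : ∀ s w, σ s w = (s * w.1, s⁻¹ * w.2)) :
    -- `σ_s` maps `W_m` to `W_{s^{-1-ρ⁻¹} m}`; in particular the spread is `G`-invariant
    (∀ s : F, s ≠ 0 → ∀ m : F, σ s '' Wm m = Wm (s⁻¹ * (ρ.symm s)⁻¹ * m)) ∧
    (∀ s : F, s ≠ 0 → σ s '' Y = Y) ∧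
    -- `{W_0}` and `{Y}` are singleton orbits
    (∀ s : F, s ≠ 0 → σ s '' Wm 0 = Wm 0) ∧
    -- the four orbits are distinct
    (Wm 0 ≠ Y) ∧
    (∀ m : F, m ≠ 0 → Wm m ≠ Wm 0 ∧ Wm m ≠ Y) ∧
    -- two subspaces `W_m`, `W_{m'}` (`m, m' ≠ 0`) lie in the same `G`-orbit iff
    -- `m` and `m'` are both squares or both nonsquares
    (∀ m m' : F, m ≠ 0 → m' ≠ 0 →
      ((∃ s : F, s ≠ 0 ∧ σ s '' Wm m = Wm m') ↔
        ((∃ c : F, c ≠ 0 ∧ m = c ^ 2) ↔ (∃ c : F, c ≠ 0 ∧ m' = c ^ 2)))) := by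
  have hF : ringChar F ≠ 2 := fun h2 => by
    have := FiniteField.even_card_of_char_two h2
    rw [Nat.odd_iff] at hodd
    omega
  have himage (s : F) (hs : s ≠ 0) (m : F) : σ s '' Wm m = Wm (s⁻¹ * (ρ.symm s)⁻¹ * m) := by
    have hs1 : ρ s ≠ 0 := by simpa using hs
    have hs2 : ρ.symm s ≠ 0 := by simpa using hs
    ext ⟨x, y⟩
    simp only [hWm, Set.mem_image, Set.mem_ofPred_eq, hσ, Prod.mk.injEq, Prod.exists]
    constructor
    · rintro ⟨a, b, rfl, rfl, rfl⟩
      simp only [map_mul, map_inv₀, RingEquiv.apply_symm_apply]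
      field_simp
    · intro h
      refine ⟨s⁻¹ * x, s * y, ?_, by field_simp, by field_simp⟩
      rw [h]
      simp only [map_mul, map_inv₀, RingEquiv.apply_symm_apply]
      field_simp
  have hinj : Function.Injective Wm := by
    intro m m' h
    have hmem : ((1 : F), m + ρ m) ∈ Wm m' := by
      rw [← h, hWm]
      simp
    simp only [hWm, Set.mem_ofPred_eq, map_one, mul_one] at hmem
    by_contra hne
    refine hm1 (m - m') (sub_ne_zero.mpr hne) ?_
    rw [map_sub]
    linear_combination hmem
  have hWmY (m : F) : Wm m ≠ Y := by
    intro h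
    have hmem : ((1 : F), m + ρ m) ∈ Y := by
      rw [← h, hWm]
      simp
    simp [hY] at hmem
  have hsymm (x : F) (hx : x ≠ 0) : ρ.symm x ≠ -x := by
    intro h
    refine hm1 x hx ?_
    have := congrArg ρ h
    rw [RingEquiv.apply_symm_apply, map_neg] at this
    exact neg_eq_iff_eq_neg.mp this.symm
  refine ⟨himage, fun s hs => ?_, fun s hs => by rw [himage s hs, mul_zero], hWmY 0,
    fun m hm => ⟨fun h => hm (hinj h), hWmY m⟩, fun m m' hm hm' => ?_⟩
  · ext ⟨x, y⟩
    simp only [hY, Set.mem_image, Set.mem_ofPred_eq, hσ, Prod.mk.injEq, Prod.exists]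
    constructor
    · rintro ⟨a, b, rfl, rfl, rfl⟩
      simp
    · rintro rfl
      exact ⟨0, s * y, rfl, by simp, by field_simp⟩
  · rw [← isSquare_iff_exists_ne_zero_sq hm, ← isSquare_iff_exists_ne_zero_sq hm']
    constructor
    · rintro ⟨s, hs, h⟩
      rw [himage s hs] at h
      have hs2 : ρ.symm s ≠ 0 := by simpa using hs
      have hm_eq : m = s * ρ.symm s * m' := by
        rw [← hinj h]
        field_simp
      have hsq := FiniteField.isSquare_mul_map hF ρ.symm hs
      rw [← FiniteField.isSquare_mul_iff_of_ne_zero hF hm hm', hm_eq, mul_assoc]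
      exact hsq.mul (IsSquare.mul_self m')
    · intro h
      rw [← FiniteField.isSquare_mul_iff_of_ne_zero hF hm hm'] at h
      have hdiv : IsSquare (m / m') := by
        have := h.div (IsSquare.mul_self m')
        rwa [mul_div_mul_right _ _ hm'] at this
      obtain ⟨s, hs, hs_eq⟩ := FiniteField.exists_eq_mul_map_of_isSquare hF ρ.symm hsymm
        (div_ne_zero hm hm') hdiv
      refine ⟨s, hs, ?_⟩
      rw [himage s hs, ← mul_inv, ← hs_eq, inv_div, div_mul_cancel₀ _ hm]
end

section
/- Let F be a finite field of odd order and ρ a field automorphism of F of odd order t. Define β : F → F by β(v) = (1/2)(a_0 v + a_1 v^ρ + ⋯ + a_{t−1} v^{ρ^{t−1}}), where for t ≡ 1 (mod 4) the signs are a_{4i} = a_{4i+1} = 1 and a_{4i+2} = a_{4i+3} = −1 (i ≥ 0), and for t ≡ 3 (mod 4) they are a_{4i} = a_{4i+3} = −1 and a_{4i+1} = a_{4i+2} = 1 (i ≥ 0). Then β(v)^{ρ^{-1}} + β(v)^{ρ} = v for all v ∈ F; that is, β is the inverse of the map α(u) = u^{ρ^{-1}} + u^{ρ}. -/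
open scoped BigOperators

/-- **Lemma.** Let `F` be a finite field of odd order and `ρ` a field automorphism of `F`
of odd order `t`.  Define `β v = 2⁻¹ (a 0 • v + a 1 • v^ρ + ⋯ + a (t-1) • v^{ρ^{t-1}})`,
where for `t ≡ 1 (mod 4)` the signs are `a_{4i} = a_{4i+1} = 1`, `a_{4i+2} = a_{4i+3} = -1`
and for `t ≡ 3 (mod 4)` they are `a_{4i} = a_{4i+3} = -1`, `a_{4i+1} = a_{4i+2} = 1`.
Then `β(v)^{ρ⁻¹} + β(v)^ρ = v` for all `v`; that is, `β` is the (two-sided) inverse of the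
map `α(u) = u^{ρ⁻¹} + u^ρ`. -/
theorem inverse_of_alpha_explicit
    (F : Type*) [Field F] [Fintype F] (hodd : Odd (Fintype.card F))
    (ρ : RingAut F) (t : ℕ) (ht : orderOf ρ = t) (htodd : Odd t)
    (a : ℕ → F)
    (ha1 : t % 4 = 1 → ∀ j, a j = if j % 4 = 0 ∨ j % 4 = 1 then 1 else -1)
    (ha3 : t % 4 = 3 → ∀ j, a j = if j % 4 = 1 ∨ j % 4 = 2 then 1 else -1)
    (β : F → F)
    (hβ : ∀ v : F, β v = (2⁻¹ : F) * ∑ j ∈ Finset.range t, a j * (ρ ^ j) v) :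
    (∀ v : F, ρ⁻¹ (β v) + ρ (β v) = v) ∧
    Function.Bijective (fun u : F => ρ⁻¹ u + ρ u) ∧
    (∀ u : F, β (ρ⁻¹ u + ρ u) = u) := by
  have h2 : (2 : F) ≠ 0 := by
    apply Ring.two_ne_zero
    intro h
    have := FiniteField.even_card_of_char_two h
    rw [Nat.odd_iff] at hodd
    omega
  have hρt (v : F) : (ρ ^ t) v = v := by rw [← ht, pow_orderOf_eq_one, RingAut.one_apply]
  have hmod : t % 4 = 1 ∨ t % 4 = 3 := by
    rw [Nat.odd_iff] at htodd
    omega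
  -- Signs are fixed by `ρ`, and `a` satisfies `a (j + 2) = -a j` with boundary values at `t`.
  obtain ⟨hfix, hstep, hat, hat'⟩ :
      (∀ j, ρ (a j) = a j) ∧ (∀ j, a (j + 2) = -a j) ∧ a t = a 0 ∧ a 1 - a (t + 1) = 2 := by
    rcases hmod with h | h
    · have ha := ha1 h
      refine ⟨fun j => ?_, fun j => ?_, ?_, ?_⟩
      · rw [ha]; split_ifs <;> simp
      · rw [ha, ha]; split_ifs <;> first | omega | simp
      · rw [ha, ha, h]; simp
      · rw [ha, ha, Nat.add_mod, h]; norm_num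
    · have ha := ha3 h
      refine ⟨fun j => ?_, fun j => ?_, ?_, ?_⟩
      · rw [ha]; split_ifs <;> simp
      · rw [ha, ha]; split_ifs <;> first | omega | simp
      · rw [ha, ha, h]; simp
      · rw [ha, ha, Nat.add_mod, h]; norm_num
  have hpow (j : ℕ) (v : F) : ρ ((ρ ^ j) v) = (ρ ^ (j + 1)) v := by
    rw [pow_succ', RingAut.mul_apply]
  have hright (v : F) : ρ⁻¹ (β v) + ρ (β v) = v := by
    apply ρ.injective
    have hinv : ρ (ρ⁻¹ (β v)) = β v := ρ.apply_symm_apply (β v)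
    have hρρ : ρ (ρ (β v)) = 2⁻¹ * ∑ j ∈ Finset.range t, a j * (ρ ^ (j + 2)) v := by
      simp only [hβ, map_mul, map_sum, map_inv₀, map_ofNat, hfix, hpow]
    have htel := Finset.sum_range_sub'
      (fun j => a j * (ρ ^ j) v + a (j + 1) * (ρ ^ (j + 1)) v) t
    have hsum : ∑ j ∈ Finset.range t, a j * (ρ ^ j) v
        + ∑ j ∈ Finset.range t, a j * (ρ ^ (j + 2)) v = 2 * ρ v := by
      rw [← Finset.sum_add_distrib, ← hat', sub_mul]
      trans
      · refine Eq.trans (Finset.sum_congr rfl fun j _ => ?_) htel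
        simp only [add_assoc, Nat.reduceAdd, hstep]
        ring
      · rw [← hpow t v, hρt, hat]
        simp only [pow_zero, zero_add, pow_one, RingAut.one_apply]
        ring
    rw [map_add, hinv, hρρ, hβ, ← mul_add, hsum, inv_mul_cancel_left₀ h2]
  have hbij : Function.Bijective (fun u : F => ρ⁻¹ u + ρ u) :=
    Finite.surjective_iff_bijective.mp fun v => ⟨β v, hright v⟩
  exact ⟨hright, hbij, fun u => hbij.injective (hright _)⟩
end

section
/- Let F = 𝔽_q with q = q₁^t odd, t odd, and let ρ be a nontrivial automorphism of F with −1 not of the form x^{ρ−1} for x ∈ F*. Let β : F → F be the inverse of the map α(u) = u^{ρ^{-1}} + u^{ρ}. Then the following family of q+1 subsets of W = F ⊕ F is a symplectic spread with respect to the form ⟨(u,v),(u',v')⟩ = tr(uv' − vu'): the subspace {(x,0) : x ∈ F}; the subspace {(0,y) : y ∈ F}; the subspaces {(x, m x^{ρ^{-1}} + m^ρ x^ρ) : x ∈ F} for each nonzero nonsquare m ∈ F; and the subspaces {(x, s·β(xs)) : x ∈ F} for s ranging over a set of representatives of F*/{±1}. That is, each member is a totally isotropic 𝔽_p-subspace of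 W and every nonzero element of W lies in exactly one member. -/
section BBLP

variable {F : Type*} [Field F] (ρ : F ≃+* F)

/-- The BKLA presemifield product `m x^{ρ⁻¹} + m^ρ x^ρ` has no zero divisors. -/
theorem bkla_mul_ne_zero (hm1 : ∀ x : F, x ≠ 0 → ρ x ≠ -x) {m x : F} (hm : m ≠ 0) (hx : x ≠ 0) :
    m * ρ.symm x + ρ m * ρ x ≠ 0 := by
  intro h
  have hx' : ρ.symm x ≠ 0 := by simpa using hx
  refine hm1 (m * x * ρ.symm x) (mul_ne_zero (mul_ne_zero hm hx) hx') ?_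
  simp only [map_mul, RingEquiv.apply_symm_apply]
  linear_combination x * h

theorem bkla_mul_injective (hm1 : ∀ x : F, x ≠ 0 → ρ x ≠ -x) {x : F} (hx : x ≠ 0) :
    Function.Injective fun m : F => m * ρ.symm x + ρ m * ρ x := by
  intro m n h
  by_contra hne
  refine bkla_mul_ne_zero ρ hm1 (sub_ne_zero.mpr hne) hx ?_
  rw [map_sub]
  linear_combination h

/-- Multiplication by a twisted square `d d^{ρ⁻¹}` in terms of `α`. -/
theorem bkla_mul_twisted_square (d x : F) :
    d * ρ.symm d * ρ.symm x + ρ (d * ρ.symm d) * ρ x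
      = d * (ρ.symm (d * x) + ρ (d * x)) := by
  simp only [map_mul, RingEquiv.apply_symm_apply]
  ring

theorem eq_one_or_eq_neg_one_of_twisted_square (hm1 : ∀ x : F, x ≠ 0 → ρ x ≠ -x) {d : F}
    (h : d * ρ.symm d = 1) : d = 1 ∨ d = -1 := by
  have h' : ρ d * d = 1 := by simpa using congrArg ρ h
  have hd : d ≠ 0 := right_ne_zero_of_mul_eq_one h'
  have hsymm : ρ.symm d = ρ d := mul_left_cancel₀ hd (by rw [h, mul_comm, h'])
  have hρρ : ρ (ρ d) = d := by rw [← hsymm, RingEquiv.apply_symm_apply]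
  have hfix : d - ρ d = 0 := by
    by_contra hne
    refine hm1 _ hne ?_
    rw [map_sub, hρρ]
    ring
  refine mul_self_eq_one_iff.mp ?_
  linear_combination h' + d * hfix

theorem eq_or_eq_neg_of_twisted_square_eq (hm1 : ∀ x : F, x ≠ 0 → ρ x ≠ -x) {d e : F} (he : e ≠ 0)
    (h : d * ρ.symm d = e * ρ.symm e) : d = e ∨ d = -e := by
  have he' : ρ.symm e ≠ 0 := by simpa using he
  have : d / e * ρ.symm (d / e) = 1 := by
    rw [map_div₀, div_mul_div_comm, h, div_self (mul_ne_zero he he')]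
  rcases eq_one_or_eq_neg_one_of_twisted_square ρ hm1 this with h1 | h1
  · left
    rwa [div_eq_one_iff_eq he] at h1
  · right
    rw [div_eq_iff he] at h1
    rw [h1]
    ring

theorem isSquare_twisted_square [Finite F] (d : F) : IsSquare (d * ρ.symm d) := by
  have := Fintype.ofFinite F
  by_cases hd : IsSquare d
  · exact hd.mul (hd.map ρ.symm)
  · have hd' : ¬IsSquare (ρ.symm d) := fun h => hd (by simpa using h.map ρ)
    classical
    have hd0 : d ≠ 0 := by
      rintro rfl
      exact hd IsSquare.zero
    have hd0' : ρ.symm d ≠ 0 := by simpa using hd0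
    rw [← quadraticChar_one_iff_isSquare (mul_ne_zero hd0 hd0'), map_mul,
      quadraticChar_neg_one_iff_not_isSquare.mpr hd,
      quadraticChar_neg_one_iff_not_isSquare.mpr hd']
    norm_num

/-- Every nonzero square is a twisted square: the endomorphisms `d ↦ d d^{ρ⁻¹}` and `d ↦ d²` of
`F*` have the same kernel, hence ranges of the same size. -/
theorem exists_twisted_square_eq_sq [Finite F] (hm1 : ∀ x : F, x ≠ 0 → ρ x ≠ -x) {c : F}
    (hc : c ≠ 0) : ∃ d : F, d ≠ 0 ∧ d * ρ.symm d = c ^ 2 := by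
  let φ : Fˣ →* Fˣ := MonoidHom.id Fˣ * Units.map (ρ.symm : F →* F)
  let ψ : Fˣ →* Fˣ := powMonoidHom 2
  have hφ (d : Fˣ) : ((φ d : Fˣ) : F) = d * ρ.symm d := rfl
  have hψ (d : Fˣ) : ((ψ d : Fˣ) : F) = (d : F) ^ 2 := by simp [ψ]
  have hker : φ.ker = ψ.ker := by
    ext d
    rw [MonoidHom.mem_ker, MonoidHom.mem_ker, Units.ext_iff, Units.ext_iff, hφ, hψ, Units.val_one]
    constructor
    · intro h
      rcases eq_one_or_eq_neg_one_of_twisted_square ρ hm1 h with h | h <;> simp [h]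
    · intro h
      rcases mul_self_eq_one_iff.mp ((sq _).symm.trans h) with h | h <;> simp [h]
  have hle : φ.range ≤ ψ.range := by
    rintro _ ⟨d, rfl⟩
    obtain ⟨r, hr⟩ := isSquare_twisted_square ρ (d : F)
    have hr0 : r ≠ 0 := by
      rintro rfl
      exact (φ d).ne_zero (by rw [hφ, hr, zero_mul])
    refine ⟨Units.mk0 r hr0, Units.ext ?_⟩
    rw [hφ, hψ, hr, Units.val_mk0, sq]
  have hcard : Nat.card ψ.range ≤ Nat.card φ.range := by
    rw [← Subgroup.index_ker, ← Subgroup.index_ker, hker]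
  have hmem : Units.mk0 (c ^ 2) (pow_ne_zero 2 hc) ∈ ψ.range :=
    ⟨Units.mk0 c hc, Units.ext (by rw [hψ]; simp)⟩
  rw [← Subgroup.eq_of_le_of_card_ge hle hcard] at hmem
  obtain ⟨d, hd⟩ := hmem
  exact ⟨d, d.ne_zero, by rw [← hφ, hd, Units.val_mk0]⟩

theorem trace_ringEquiv_apply (p : ℕ) [Algebra (ZMod p) F] (x : F) :
    Algebra.trace (ZMod p) F (ρ x) = Algebra.trace (ZMod p) F x :=
  Algebra.trace_eq_of_algEquiv (AlgEquiv.ofRingEquiv (f := ρ) fun r =>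
    RingHom.congr_fun (RingHom.ext_zmod ((ρ : F →+* F).comp (algebraMap (ZMod p) F))
      (algebraMap (ZMod p) F)) r) x

/-- The map `x ↦ m x^{ρ⁻¹} + m^ρ x^ρ` is self-adjoint for the trace form. -/
theorem trace_bkla_selfAdjoint (p : ℕ) [Algebra (ZMod p) F] (m u w : F) :
    Algebra.trace (ZMod p) F
      (u * (m * ρ.symm w + ρ m * ρ w) - (m * ρ.symm u + ρ m * ρ u) * w) = 0 := by
  have h1 := trace_ringEquiv_apply ρ p (u * m * ρ.symm w)
  have h2 := trace_ringEquiv_apply ρ p (ρ.symm u * m * w)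
  simp only [map_mul, RingEquiv.apply_symm_apply] at h1 h2
  have : u * (m * ρ.symm w + ρ m * ρ w) - (m * ρ.symm u + ρ m * ρ u) * w
      = (u * m * ρ.symm w - ρ u * ρ m * w) + (u * ρ m * ρ w - ρ.symm u * m * w) := by ring
  rw [this, map_add, map_sub, map_sub, h1, h2]
  ring

theorem exists_submodule_eq_graph (p : ℕ) [Algebra (ZMod p) F] (f : F → F)
    (hf : ∀ x y, f (x + y) = f x + f y) :
    ∃ S : Submodule (ZMod p) (F × F), (S : Set (F × F)) = {w : F × F | w.2 = f w.1} := by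
  refine ⟨((AddMonoidHom.mk' f hf).toZModLinearMap p).graph, ?_⟩
  ext w
  simp [LinearMap.mem_graph_iff]

end BBLP

/-- A family consisting of the vertical line and of graphs of functions which covers every nonzero
point of the plane exactly once has one member more than the field has elements. -/
theorem ncard_eq_card_add_one_of_partition {F : Type*} [Field F] [Fintype F]
    {𝒮 : Set (Set (F × F))} {Y : Set (F × F)} (hY : Y = {w : F × F | w.1 = 0}) (hY𝒮 : Y ∈ 𝒮)
    (hgraph : ∀ M ∈ 𝒮, M ≠ Y → ∃ f : F → F, M = {w : F × F | w.2 = f w.1})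
    (hcover : ∀ w : F × F, w ≠ 0 → ∃! M, M ∈ 𝒮 ∧ w ∈ M) :
    𝒮.ncard = Fintype.card F + 1 := by
  have hne (y : F) : ((1, y) : F × F) ≠ 0 := fun h => one_ne_zero (congrArg Prod.fst h)
  choose g hg hguniq using fun y : F => hcover (1, y) (hne y)
  have hgY (y : F) : g y ≠ Y := by
    intro h
    have := (hg y).2
    rw [h, hY] at this
    exact one_ne_zero this
  have hinj : Function.Injective g := by
    intro y z h
    obtain ⟨f, hf⟩ := hgraph _ (hg y).1 (hgY y)
    have hy := (hg y).2
    have hz := (hg z).2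
    rw [← h] at hz
    rw [hf] at hy hz
    exact Eq.trans hy (Eq.symm hz)
  have hrange : Set.range g = 𝒮 \ {Y} := by
    ext M
    constructor
    · rintro ⟨y, rfl⟩
      exact ⟨(hg y).1, hgY y⟩
    · rintro ⟨hM, hMY⟩
      obtain ⟨f, hf⟩ := hgraph M hM hMY
      exact ⟨f 1, (hguniq (f 1) M ⟨hM, by rw [hf]; rfl⟩).symm⟩
  rw [← Set.ncard_sdiff_singleton_add_one hY𝒮 (Set.toFinite _), ← hrange, ← Set.image_univ,
    Set.ncard_image_of_injective _ hinj, Set.ncard_univ, Nat.card_eq_fintype_card]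

/-- **Theorem.** Let `F = 𝔽_q`, `q = q₁^t` odd with `t` odd, and let `ρ` be a nontrivial
automorphism of `F` with `-1 ∉ (F*)^{ρ-1}` (i.e. `ρ x ≠ -x` for `x ≠ 0`).  Let
`β : F → F` be the inverse of `α(u) = u^{ρ⁻¹} + u^ρ`.  Then the following family of
`q + 1` subsets of `W = F ⊕ F` — the Ball–Bamberg–Lavrauw–Penttila spread —
is a symplectic spread for the form `⟨(u,v),(u',v')⟩ = tr (u v' - v u')`:
`X = {(x,0)}`; `Y = {(0,y)}`; `W_m = {(x, m x^{ρ⁻¹} + m^ρ x^ρ)}` for each nonzero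
nonsquare `m`; and `W'_s = {(x, s β(x s))}` for `s` ranging over a set of representatives
of `F*/{±1}`.  That is, each member is a totally isotropic `𝔽_p`-subspace of `W`, every
nonzero element of `W` lies in exactly one member, and there are `q + 1` members. -/
theorem bblp_family_is_symplectic_spread
    (p q₁ t : ℕ) [Fact p.Prime] (hp : Odd p)
    (F : Type*) [Field F] [Fintype F] [CharP F p] [Algebra (ZMod p) F]
    (hq : Fintype.card F = q₁ ^ t) (hq₁ : Odd q₁) (ht : Odd t)
    (ρ : F ≃+* F) (hρ : ρ ≠ RingEquiv.refl F)
    (hm1 : ∀ x : F, x ≠ 0 → ρ x ≠ -x)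
    -- `β` is the two-sided inverse of `α(u) = u^{ρ⁻¹} + u^ρ`
    (β : F → F)
    (hβ₁ : ∀ u : F, β (ρ.symm u + ρ u) = u)
    (hβ₂ : ∀ v : F, ρ.symm (β v) + ρ (β v) = v)
    -- a set of representatives of `F* / {±1}`
    (Reps : Set F) (hReps0 : (0 : F) ∉ Reps)
    (hReps : ∀ x : F, x ≠ 0 → ∃! s, s ∈ Reps ∧ (x = s ∨ x = -s))
    -- the members of the family
    (X Y : Set (F × F))
    (hX : X = {w : F × F | w.2 = 0}) (hY : Y = {w : F × F | w.1 = 0})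
    (Wm : F → Set (F × F))
    (hWm : ∀ m, Wm m = {w : F × F | w.2 = m * ρ.symm w.1 + ρ m * ρ w.1})
    (Ws : F → Set (F × F))
    (hWs : ∀ s, Ws s = {w : F × F | w.2 = s * β (w.1 * s)})
    (𝒮 : Set (Set (F × F)))
    (h𝒮 : 𝒮 = {X, Y} ∪ (Wm '' {m : F | m ≠ 0 ∧ ¬∃ c : F, c ≠ 0 ∧ m = c ^ 2}) ∪ (Ws '' Reps)) :
    -- every member is a totally isotropic `𝔽_p`-subspace
    (∀ M ∈ 𝒮,
      (∃ S : Submodule (ZMod p) (F × F), (S : Set (F × F)) = M) ∧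
      (∀ u ∈ M, ∀ w ∈ M,
        Algebra.trace (ZMod p) F
          ((Prod.fst u) * (Prod.snd w) - (Prod.snd u) * (Prod.fst w)) = 0)) ∧
    -- every nonzero point of `W` lies in a unique member
    (∀ w : F × F, w ≠ 0 → ∃! M, M ∈ 𝒮 ∧ w ∈ M) ∧
    -- the family consists of `q + 1` subspaces
    𝒮.ncard = Fintype.card F + 1 := by
  have hβ0 : β 0 = 0 := by simpa using hβ₁ 0
  have hβadd (a b : F) : β (a + b) = β a + β b := by
    rw [← hβ₁ (β a + β b), map_add, map_add, add_add_add_comm, hβ₂, hβ₂]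
  have hβneg (a : F) : β (-a) = -β a := by
    rw [eq_neg_iff_add_eq_zero, ← hβadd, neg_add_cancel, hβ0]
  have hβne {a : F} (ha : a ≠ 0) : β a ≠ 0 := by
    intro h
    refine ha ?_
    rw [← hβ₂ a, h, map_zero, map_zero, add_zero]
  -- a point of `W'_s` lies on the BKLA member of a twisted square
  have hWs_twisted {s x : F} (hs : s ≠ 0) (hx : x ≠ 0) :
      s * β (x * s) = β (x * s) / x * ρ.symm (β (x * s) / x) * ρ.symm x
        + ρ (β (x * s) / x * ρ.symm (β (x * s) / x)) * ρ x := by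
    rw [bkla_mul_twisted_square, div_mul_cancel₀ _ hx, hβ₂]
    field_simp
  have hcases : ∀ M, M ∈ 𝒮 ↔ M = X ∨ M = Y ∨
      (∃ m, (m ≠ 0 ∧ ¬IsSquare m) ∧ Wm m = M) ∨ ∃ s ∈ Reps, Ws s = M := by
    intro M
    have hsq (m : F) : (m ≠ 0 ∧ ¬∃ c : F, c ≠ 0 ∧ m = c ^ 2) ↔ m ≠ 0 ∧ ¬IsSquare m := by
      refine and_congr_right fun hm => not_congr ⟨?_, ?_⟩
      · rintro ⟨c, -, rfl⟩
        exact IsSquare.sq c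
      · rintro ⟨c, rfl⟩
        exact ⟨c, left_ne_zero_of_mul hm, (sq c).symm⟩
    simp only [h𝒮, hsq, Set.mem_union, Set.mem_insert_iff, Set.mem_singleton_iff, Set.mem_image,
      Set.mem_ofPred_eq, or_assoc]
  have hcover : ∀ w : F × F, w ≠ 0 → ∃! M, M ∈ 𝒮 ∧ w ∈ M := by
    rintro ⟨x, y⟩ hw
    by_cases hx : x = 0
    · subst hx
      have hy : y ≠ 0 := fun h => hw (by rw [h]; rfl)
      refine ⟨Y, ⟨(hcases Y).mpr (Or.inr (Or.inl rfl)), by rw [hY]; rfl⟩, ?_⟩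
      rintro M ⟨hM, hwM⟩
      rcases (hcases M).mp hM with rfl | rfl | ⟨m, -, rfl⟩ | ⟨s, -, rfl⟩
      · rw [hX] at hwM
        exact absurd hwM hy
      · rfl
      · rw [hWm] at hwM
        exact absurd (by simpa using hwM) hy
      · rw [hWs] at hwM
        exact absurd (by simpa [hβ0] using hwM) hy
    by_cases hy : y = 0
    · subst hy
      refine ⟨X, ⟨(hcases X).mpr (Or.inl rfl), by rw [hX]; rfl⟩, ?_⟩
      rintro M ⟨hM, hwM⟩
      rcases (hcases M).mp hM with rfl | rfl | ⟨m, hm, rfl⟩ | ⟨s, hs, rfl⟩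
      · rfl
      · rw [hY] at hwM
        exact absurd hwM hx
      · rw [hWm] at hwM
        exact absurd (Eq.symm hwM) (bkla_mul_ne_zero ρ hm1 hm.1 hx)
      · rw [hWs] at hwM
        have hs0 : s ≠ 0 := fun h => hReps0 (h ▸ hs)
        exact absurd (Eq.symm hwM) (mul_ne_zero hs0 (hβne (mul_ne_zero hx hs0)))
    have hXn : (x, y) ∉ X := by rw [hX]; exact hy
    have hYn : (x, y) ∉ Y := by rw [hY]; exact hx
    have hinj := bkla_mul_injective ρ hm1 hx
    obtain ⟨m, hm⟩ := Finite.surjective_of_injective hinj y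
    have hm0 : m ≠ 0 := by
      rintro rfl
      exact hy (by simpa using hm.symm)
    have hWs_mem {s : F} (hs : s ∈ Reps) (h : (x, y) ∈ Ws s) :
        s ≠ 0 ∧ y = s * β (x * s) ∧ m = β (x * s) / x * ρ.symm (β (x * s) / x) := by
      rw [hWs] at h
      have hs0 : s ≠ 0 := fun h => hReps0 (h ▸ hs)
      exact ⟨hs0, h, hinj (hm.trans (Eq.trans h (hWs_twisted hs0 hx)))⟩
    by_cases hsq : IsSquare m
    · obtain ⟨c, hc⟩ := hsq
      have hc0 : c ≠ 0 := by
        rintro rfl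
        exact hm0 (by simpa using hc)
      obtain ⟨d, hd0, hd⟩ := exists_twisted_square_eq_sq ρ hm1 hc0
      have hmd : m = d * ρ.symm d := by rw [hd, hc, sq]
      have hyd : y = d * (ρ.symm (d * x) + ρ (d * x)) := by
        rw [← bkla_mul_twisted_square, ← hmd]
        exact hm.symm
      have hdx : d * x ≠ 0 := mul_ne_zero hd0 hx
      have hs0 : y / (d * x) ≠ 0 := div_ne_zero hy hdx
      have hβs : β (x * (y / (d * x))) = d * x := by
        have : x * (y / (d * x)) = ρ.symm (d * x) + ρ (d * x) := by
          field_simp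
          rw [mul_comm x d]
          exact hyd
        rw [this, hβ₁]
      have hys : y = y / (d * x) * β (x * (y / (d * x))) := by
        rw [hβs, div_mul_cancel₀ _ hdx]
      obtain ⟨s, ⟨hs, hss⟩, -⟩ := hReps _ hs0
      have hmem : (x, y) ∈ Ws s := by
        rw [hWs]
        change y = s * β (x * s)
        rcases hss with h | h
        · rw [← h]
          exact hys
        · rw [h, mul_neg, hβneg, neg_mul_neg] at hys
          exact hys
      refine ⟨Ws s, ⟨(hcases _).mpr (Or.inr (Or.inr (Or.inr ⟨s, hs, rfl⟩))), hmem⟩, ?_⟩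
      rintro M ⟨hM, hwM⟩
      rcases (hcases M).mp hM with rfl | rfl | ⟨n, hn, rfl⟩ | ⟨r, hr, rfl⟩
      · exact absurd hwM hXn
      · exact absurd hwM hYn
      · rw [hWm] at hwM
        have hmn : m = n := hinj (hm.trans hwM)
        exact absurd ⟨c, hmn ▸ hc⟩ hn.2
      · obtain ⟨hr0, hyr, hmr⟩ := hWs_mem hr hwM
        obtain ⟨hs0, hys, hms⟩ := hWs_mem hs hmem
        have hβs0 : β (x * s) ≠ 0 := hβne (mul_ne_zero hx hs0)
        have hrs : r = s ∨ r = -s := by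
          rcases eq_or_eq_neg_of_twisted_square_eq ρ hm1 (div_ne_zero hβs0 hx)
            (hmr.symm.trans hms) with h | h
          · left
            rw [div_left_inj' hx] at h
            rw [hys, h] at hyr
            exact (mul_right_cancel₀ hβs0 hyr).symm
          · right
            rw [← neg_div, div_left_inj' hx] at h
            rw [hys, h, mul_neg, ← neg_mul] at hyr
            rw [mul_right_cancel₀ hβs0 hyr, neg_neg]
        rw [(hReps r hr0).unique ⟨hr, Or.inl rfl⟩ ⟨hs, hrs⟩]
    · refine ⟨Wm m, ⟨(hcases _).mpr (Or.inr (Or.inr (Or.inl ⟨m, ⟨hm0, hsq⟩, rfl⟩))), ?_⟩, ?_⟩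
      · rw [hWm]
        exact hm.symm
      rintro M ⟨hM, hwM⟩
      rcases (hcases M).mp hM with rfl | rfl | ⟨n, -, rfl⟩ | ⟨r, hr, rfl⟩
      · exact absurd hwM hXn
      · exact absurd hwM hYn
      · rw [hWm] at hwM
        have hmn : m = n := hinj (hm.trans hwM)
        rw [hmn]
      · obtain ⟨-, -, hmr⟩ := hWs_mem hr hwM
        exact absurd (hmr ▸ isSquare_twisted_square ρ _) hsq
  refine ⟨?_, hcover, ncard_eq_card_add_one_of_partition hY
    ((hcases Y).mpr (Or.inr (Or.inl rfl))) ?_ hcover⟩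
  · intro M hM
    rcases (hcases M).mp hM with rfl | rfl | ⟨m, -, rfl⟩ | ⟨s, hs, rfl⟩
    · subst hX
      refine ⟨exists_submodule_eq_graph p (fun _ => 0) (by simp), ?_⟩
      rintro ⟨u, u'⟩ hu ⟨w, w'⟩ hw
      simp only [Set.mem_ofPred_eq] at hu hw
      simp [hu, hw]
    · subst hY
      refine ⟨⟨LinearMap.ker (LinearMap.fst (ZMod p) F F), ?_⟩, ?_⟩
      · ext w
        simp
      rintro ⟨u, u'⟩ hu ⟨w, w'⟩ hw
      simp only [Set.mem_ofPred_eq] at hu hw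
      simp [hu, hw]
    · rw [hWm]
      refine ⟨exists_submodule_eq_graph p (fun x => m * ρ.symm x + ρ m * ρ x) fun x y => ?_, ?_⟩
      · simp only [map_add]
        ring
      rintro ⟨u, u'⟩ hu ⟨w, w'⟩ hw
      simp only [Set.mem_ofPred_eq] at hu hw
      rw [hu, hw]
      exact trace_bkla_selfAdjoint ρ p m u w
    · rw [hWs]
      refine ⟨exists_submodule_eq_graph p (fun x => s * β (x * s)) fun x y => ?_, ?_⟩
      · simp only [add_mul, hβadd, mul_add]
      rintro ⟨u, u'⟩ hu ⟨w, w'⟩ hw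
      simp only [Set.mem_ofPred_eq] at hu hw
      have h := trace_bkla_selfAdjoint ρ p 1 (β (w * s)) (β (u * s))
      simp only [map_one, one_mul, hβ₂] at h
      rw [hu, hw, ← h]
      congr 1
      ring
  · intro M hM hMY
    rcases (hcases M).mp hM with rfl | rfl | ⟨m, -, rfl⟩ | ⟨s, -, rfl⟩
    · exact ⟨fun _ => 0, hX⟩
    · exact absurd rfl hMY
    · exact ⟨fun x => m * ρ.symm x + ρ m * ρ x, hWm m⟩
    · exact ⟨fun x => s * β (x * s), hWs s⟩
end

section
/- Let F = 𝔽_q be a finite field of even order q = 2^r and let (F, +, ∘) be a symplectic presemifield whose multiplication is written as x ∘ y = Σ_{0≤i,j≤r−1} a_{ij} x^{2^i} y^{2^j} with a_{ij} ∈ F. Then a_{ij} = a_{r−i, j−i}^{2^i} for all i, j, where the indices r−i and j−i are read modulo r. -/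
open scoped BigOperators

/-- An additive polynomial of `2`-degree less than `r` vanishing on a field with `2 ^ r` elements
has all its coefficients zero. -/
theorem coeff_eq_zero_of_sum_mul_pow_two_pow_eq_zero {r : ℕ} {F : Type*} [Field F] [Fintype F]
    (hcard : Fintype.card F = 2 ^ r) (c : Fin r → F)
    (h : ∀ x : F, ∑ i : Fin r, c i * x ^ 2 ^ (i : ℕ) = 0) (i : Fin r) : c i = 0 := by
  classical
  set p : Polynomial F := ∑ i : Fin r, Polynomial.monomial (2 ^ (i : ℕ)) (c i) with hp
  have hdeg : p.natDegree < Fintype.card F := by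
    rw [hcard, hp]
    refine (Polynomial.natDegree_sum_le_of_forall_le (n := 2 ^ r - 1) _ _ fun k _ => ?_).trans_lt
      (Nat.sub_lt (by positivity) one_pos)
    exact (Polynomial.natDegree_monomial_le _).trans
      (Nat.le_sub_one_of_lt (Nat.pow_lt_pow_right one_lt_two k.2))
  have hzero : p = 0 :=
    Polynomial.eq_zero_of_natDegree_lt_card_of_eval_eq_zero p Function.injective_id
      (fun x => by simpa [hp, Polynomial.eval_finsetSum] using h x) hdeg
  have hcoeff : p.coeff (2 ^ (i : ℕ)) = c i := by
    simp [hp, Polynomial.finsetSum_coeff, Polynomial.coeff_monomial, Fin.val_inj]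
  rw [← hcoeff, hzero, Polynomial.coeff_zero]

/-- The exponent `n` of the Frobenius power `x ↦ x ^ 2 ^ n` only matters modulo `r`. -/
theorem pow_two_pow_mod {r : ℕ} {F : Type*} [Field F] [Fintype F]
    (hcard : Fintype.card F = 2 ^ r) (x : F) (n : ℕ) : x ^ 2 ^ (n % r) = x ^ 2 ^ n := by
  conv_rhs => rw [← Nat.mod_add_div n r, pow_add, mul_comm, pow_mul, pow_mul, ← hcard,
    FiniteField.pow_card_pow]

/-- The absolute trace is invariant under powers of the Frobenius. -/
theorem trace_pow_two_pow {F : Type*} [Field F] [Fintype F] [Algebra (ZMod 2) F] (x : F) (n : ℕ) :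
    Algebra.trace (ZMod 2) F (x ^ 2 ^ n) = Algebra.trace (ZMod 2) F x := by
  induction n with
  | zero => simp
  | succ n ih =>
    rw [pow_succ, pow_mul, ← ih]
    simpa using Algebra.trace_eq_of_algEquiv
      (FiniteField.frobeniusAlgEquivOfAlgebraic (ZMod 2) F) (x ^ 2 ^ n)

/-- The absolute trace form is nondegenerate. -/
theorem eq_zero_of_forall_trace_mul_eq_zero {F : Type*} [Field F] [Fintype F] [Algebra (ZMod 2) F]
    {w : F} (h : ∀ x : F, Algebra.trace (ZMod 2) F (x * w) = 0) : w = 0 :=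
  (traceForm_nondegenerate (ZMod 2) F).2 w h

/-- **Lemma.** Let `F = 𝔽_q` be a finite field of even order `q = 2^r` and `(F, +, ∘)` a
symplectic presemifield whose multiplication is written as
`x ∘ y = ∑_{0 ≤ i,j ≤ r-1} a i j x^{2^i} y^{2^j}`.  Then `a i j = (a (r-i) (j-i))^{2^i}`
for all `i j`, the indices `r - i` and `j - i` being read modulo `r` (here computed by the
subtraction and negation of `Fin r`). -/
theorem coeff_relation_symplectic_presemifield_even
    (r : ℕ) (hr : 0 < r)
    (F : Type*) [Field F] [Fintype F] [CharP F 2] [Algebra (ZMod 2) F]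
    (hcard : Fintype.card F = 2 ^ r)
    (a : Fin r → Fin r → F)
    (circ : F → F → F)
    (hcirc : ∀ x y : F, circ x y =
      ∑ i : Fin r, ∑ j : Fin r, a i j * x ^ 2 ^ (i : ℕ) * y ^ 2 ^ (j : ℕ))
    (hdistl : ∀ x y z : F, circ (x + y) z = circ x z + circ y z)
    (hdistr : ∀ x y z : F, circ x (y + z) = circ x y + circ x z)
    (hnzd : ∀ x y : F, circ x y = 0 → x = 0 ∨ y = 0)
    (hsympl : ∀ y x z : F,
      Algebra.trace (ZMod 2) F (x * circ z y + z * circ x y) = 0) :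
    ∀ i j : Fin r, a i j = (a (-i) (j - i)) ^ 2 ^ (i : ℕ) := by
  have : NeZero r := ⟨hr.ne'⟩
  have hterm (x y z : F) (i j : Fin r) :
      Algebra.trace (ZMod 2) F (z * (a (-i) (j - i) * x ^ 2 ^ ((-i : Fin r) : ℕ) *
          y ^ 2 ^ ((j - i : Fin r) : ℕ))) =
        Algebra.trace (ZMod 2) F
          (x * (a (-i) (j - i) ^ 2 ^ (i : ℕ) * z ^ 2 ^ (i : ℕ) * y ^ 2 ^ (j : ℕ))) := by
    have hx : (x ^ 2 ^ ((-i : Fin r) : ℕ)) ^ 2 ^ (i : ℕ) = x := by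
      rw [← pow_mul, ← pow_add, ← pow_two_pow_mod hcard, ← Fin.val_add, neg_add_cancel]
      simp
    have hy : (y ^ 2 ^ ((j - i : Fin r) : ℕ)) ^ 2 ^ (i : ℕ) = y ^ 2 ^ (j : ℕ) := by
      rw [← pow_mul, ← pow_add, ← pow_two_pow_mod hcard, ← Fin.val_add, sub_add_cancel]
    rw [← trace_pow_two_pow _ (i : ℕ), mul_pow, mul_pow, mul_pow, hx, hy]
    congr 1
    ring
  have hswap (x y z : F) : Algebra.trace (ZMod 2) F (z * circ x y) =
      Algebra.trace (ZMod 2) F (x * ∑ i : Fin r, ∑ j : Fin r,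
        a (-i) (j - i) ^ 2 ^ (i : ℕ) * z ^ 2 ^ (i : ℕ) * y ^ 2 ^ (j : ℕ)) := by
    simp only [hcirc, Finset.mul_sum, map_sum, ← hterm]
    rw [← Equiv.sum_comp (Equiv.neg (Fin r))]
    refine Finset.sum_congr rfl fun i _ => ?_
    rw [← Equiv.sum_comp (Equiv.subRight i)]
    rfl
  have hpoly (z y : F) : ∑ i : Fin r, (∑ j : Fin r,
      (a i j + a (-i) (j - i) ^ 2 ^ (i : ℕ)) * y ^ 2 ^ (j : ℕ)) * z ^ 2 ^ (i : ℕ) = 0 := by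
    refine eq_zero_of_forall_trace_mul_eq_zero fun x => ?_
    rw [← hsympl y x z, map_add, hswap x y z, ← map_add, ← mul_add, hcirc, ← Finset.sum_add_distrib]
    simp only [← Finset.sum_add_distrib, Finset.sum_mul]
    refine congrArg (fun w => Algebra.trace (ZMod 2) F (x * w)) ?_
    refine Finset.sum_congr rfl fun i _ => Finset.sum_congr rfl fun j _ => ?_
    ring
  intro i j
  refine CharTwo.add_eq_zero.mp ?_
  refine coeff_eq_zero_of_sum_mul_pow_two_pow_eq_zero hcard
    (fun j => a i j + a (-i) (j - i) ^ 2 ^ (i : ℕ)) (fun y => ?_) j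
  exact coeff_eq_zero_of_sum_mul_pow_two_pow_eq_zero hcard _ (fun z => hpoly z y) i
end

section
/- Let F be a finite field of characteristic two and suppose (F, +, *) is a commutative presemifield with multiplication given by x * y = xy + Σ_{0≤i<j≤r−1} a_{ij}(x^{2^i} y^{2^j} + x^{2^j} y^{2^i}). Then f(x) = Σ_{i<j} a_{ij} x^{2^i + 2^j} is a pseudo-planar function, and x * y = xy + f(x+y) + f(x) + f(y) for all x, y ∈ F. -/
open scoped BigOperators

/-- **Theorem (part 1).** Let `F` be a finite field of characteristic two, `|F| = 2^r`, and
suppose `(F, +, *)` is a commutative presemifield with multiplication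
`x * y = x y + ∑_{0 ≤ i < j ≤ r-1} a i j (x^{2^i} y^{2^j} + x^{2^j} y^{2^i})`.
Then `f x = ∑_{i<j} a i j x^{2^i + 2^j}` is a pseudo-planar function
(`x ↦ f (x + c) + f x + c x` is a permutation of `F` for every `c ≠ 0`), and
`x * y = x y + f (x + y) + f x + f y` for all `x y`. -/
theorem pseudoPlanar_of_commutative_presemifield_even
    (r : ℕ)
    (F : Type*) [Field F] [Fintype F] [CharP F 2]
    (hcard : Fintype.card F = 2 ^ r)
    (a : Fin r → Fin r → F)
    (mul : F → F → F)
    (hmul : ∀ x y : F, mul x y = x * y +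
      ∑ i : Fin r, ∑ j : Fin r, if i < j then
        a i j * (x ^ 2 ^ (i : ℕ) * y ^ 2 ^ (j : ℕ) + x ^ 2 ^ (j : ℕ) * y ^ 2 ^ (i : ℕ))
      else 0)
    (hcomm : ∀ x y : F, mul x y = mul y x)
    (hdistl : ∀ x y z : F, mul (x + y) z = mul x z + mul y z)
    (hdistr : ∀ x y z : F, mul x (y + z) = mul x y + mul x z)
    (hnzd : ∀ x y : F, mul x y = 0 → x = 0 ∨ y = 0)
    (f : F → F)
    (hf : ∀ x : F, f x =
      ∑ i : Fin r, ∑ j : Fin r, if i < j then a i j * x ^ (2 ^ (i : ℕ) + 2 ^ (j : ℕ)) else 0) :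
    (∀ c : F, c ≠ 0 → Function.Bijective fun x => f (x + c) + f x + c * x) ∧
    (∀ x y : F, mul x y = x * y + f (x + y) + f x + f y) := by
  have key : ∀ x y : F, mul x y = x * y + f (x + y) + f x + f y := by
    intro x y
    rw [hmul, add_assoc, add_assoc]
    congr 1
    simp only [hf, ← Finset.sum_add_distrib]
    refine Finset.sum_congr rfl fun i _ => Finset.sum_congr rfl fun j _ => ?_
    split_ifs
    · rw [pow_add, pow_add, pow_add, add_pow_char_pow, add_pow_char_pow]
      linear_combination -(a i j * x ^ 2 ^ (i : ℕ) * x ^ 2 ^ (j : ℕ)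
        + a i j * y ^ 2 ^ (i : ℕ) * y ^ 2 ^ (j : ℕ)) * CharTwo.two_eq_zero (R := F)
    · simp
  refine ⟨fun c hc => Finite.injective_iff_bijective.mp fun x y hxy => ?_, key⟩
  have hxy' : f (x + c) + f x + c * x = f (y + c) + f y + c * y := hxy
  have hmul_eq : mul x c = mul y c := by
    rw [key, key]
    linear_combination hxy'
  have hzero : mul (x + y) c = 0 := by
    rw [hdistl, hmul_eq, CharTwo.add_self_eq_zero]
  exact CharTwo.add_eq_zero.mp ((hnzd _ _ hzero).resolve_right hc)
end

section
/- Let F be a finite field of characteristic two and let (F, +, *) be a commutative presemifield with multiplication x * y = Σ_i a_i x^{2^i} y^{2^i} + Σ_{i<j} a_{ij}(x^{2^i} y^{2^j} + x^{2^j} y^{2^i}). Then the 𝔽_2-linear map g(x) = Σ_i a_i x^{2^i} (which satisfies x * x = g(x²)) is a bijection of F. -/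
open scoped BigOperators

/-- **Theorem (part 2, key step).** Let `F` be a finite field of characteristic two,
`|F| = 2^r`, and let `(F, +, *)` be a commutative presemifield with multiplication
`x * y = ∑_i b i x^{2^i} y^{2^i} + ∑_{i<j} a i j (x^{2^i} y^{2^j} + x^{2^j} y^{2^i})`.
Then the `𝔽_2`-linear map `g x = ∑_i b i x^{2^i}`, which satisfies `x * x = g (x²)`,
is a bijection of `F`. -/
theorem diagonal_linear_map_bijective_of_commutative_presemifield_even
    (r : ℕ)
    (F : Type*) [Field F] [Fintype F] [CharP F 2]
    (hcard : Fintype.card F = 2 ^ r)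
    (b : Fin r → F) (a : Fin r → Fin r → F)
    (mul : F → F → F)
    (hmul : ∀ x y : F, mul x y =
      (∑ i : Fin r, b i * x ^ 2 ^ (i : ℕ) * y ^ 2 ^ (i : ℕ)) +
      ∑ i : Fin r, ∑ j : Fin r, if i < j then
        a i j * (x ^ 2 ^ (i : ℕ) * y ^ 2 ^ (j : ℕ) + x ^ 2 ^ (j : ℕ) * y ^ 2 ^ (i : ℕ))
      else 0)
    (hcomm : ∀ x y : F, mul x y = mul y x)
    (hdistl : ∀ x y z : F, mul (x + y) z = mul x z + mul y z)
    (hdistr : ∀ x y z : F, mul x (y + z) = mul x y + mul x z)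
    (hnzd : ∀ x y : F, mul x y = 0 → x = 0 ∨ y = 0)
    (g : F → F)
    (hg : ∀ x : F, g x = ∑ i : Fin r, b i * x ^ 2 ^ (i : ℕ)) :
    (∀ x : F, mul x x = g (x ^ 2)) ∧ Function.Bijective g := by
  have hsq : ∀ x : F, mul x x = g (x ^ 2) := by
    intro x
    have hoff : ∀ i j : Fin r, (if i < j then
        a i j * (x ^ 2 ^ (i : ℕ) * x ^ 2 ^ (j : ℕ) + x ^ 2 ^ (j : ℕ) * x ^ 2 ^ (i : ℕ))
        else 0) = 0 := by
      intro i j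
      rw [mul_comm (x ^ 2 ^ (j : ℕ)), CharTwo.add_self_eq_zero, mul_zero, ite_self]
    simp only [hmul, hg, hoff, Finset.sum_const_zero, add_zero]
    exact Finset.sum_congr rfl fun i _ => by ring
  have hsurj : ∀ x : F, ∃ y : F, y ^ 2 = x :=
    Finite.surjective_of_injective (frobenius_inj F 2)
  refine ⟨hsq, Finite.injective_iff_bijective.mp fun u v huv => ?_⟩
  obtain ⟨x, rfl⟩ := hsurj u
  obtain ⟨y, rfl⟩ := hsurj v
  rw [← hsq, ← hsq] at huv
  have hzero : mul (x + y) (x + y) = 0 := by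
    rw [hdistl, hdistr, hdistr, hcomm y x, huv, add_comm (mul x y),
      CharTwo.add_self_eq_zero]
  rw [CharTwo.add_eq_zero.mp ((hnzd _ _ hzero).elim id id)]
end

section
/- Let F be a finite field of characteristic two and let (F, +, *) be a commutative presemifield. Then there exist a commutative presemifield (F, +, ⋆) strongly isotopic to (F, +, *) and a pseudo-planar function f : F → F such that x ⋆ y = xy + f(x+y) + f(x) + f(y) for all x, y ∈ F. -/
/-- Over a free module, every alternating bilinear map is the antisymmetrization of a bilinear
map (its strictly upper triangular part with respect to an ordered basis). -/
theorem exists_bilinear_sub_flip_eq_of_alternating {R V W : Type*} [CommRing R]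
    [AddCommGroup V] [Module R V] [Module.Free R V] [AddCommGroup W] [Module R W]
    (B : V →ₗ[R] V →ₗ[R] W) (hB : ∀ x, B x x = 0) :
    ∃ C : V →ₗ[R] V →ₗ[R] W, ∀ x y, B x y = C x y - C y x := by
  classical
  let b := Module.Free.chooseBasis R V
  let : LinearOrder (Module.Free.ChooseBasisIndex R V) := linearOrderOfSTO WellOrderingRel
  let C : V →ₗ[R] V →ₗ[R] W :=
    b.constr ℕ fun i => b.constr ℕ fun j => if i < j then B (b i) (b j) else 0
  have hC : ∀ i j, C (b i) (b j) = if i < j then B (b i) (b j) else 0 := fun i j => by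
    simp only [C, Module.Basis.constr_basis]
  have hskew : ∀ x y, B x y = -B y x := fun x y => by
    have h := hB (x + y)
    simp only [map_add, LinearMap.add_apply, hB, zero_add, add_zero] at h
    exact eq_neg_of_add_eq_zero_right h
  have h : B = C - C.flip := by
    refine b.ext fun i => b.ext fun j => ?_
    simp only [LinearMap.sub_apply, LinearMap.flip_apply, hC]
    rcases lt_trichotomy i j with h | rfl | h
    · simp [h, h.not_gt]
    · simp [hB]
    · simpa [h, h.not_gt] using hskew (b i) (b j)
  exact ⟨C, fun x y => by rw [h]; rfl⟩

/-- In characteristic two, a biadditive map on a field whose diagonal vanishes is the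
polarization of some function. -/
theorem exists_polarization_eq_of_biadditive {F : Type*} [Field F] [CharP F 2]
    (B : F →+ F →+ F) (hB : ∀ x, B x x = 0) :
    ∃ f : F → F, ∀ x y, B x y = f (x + y) + f x + f y := by
  let := ZMod.algebra F 2
  let B' : F →ₗ[ZMod 2] F →ₗ[ZMod 2] F := AddMonoidHom.toZModLinearMap 2
    { toFun := fun x => (B x).toZModLinearMap 2
      map_zero' := by ext; simp
      map_add' := fun x y => by ext; simp }
  obtain ⟨C, hC⟩ := exists_bilinear_sub_flip_eq_of_alternating B' hB
  refine ⟨fun x => C x x, fun x y => ?_⟩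
  have h : B x y = C x y - C y x := hC x y
  rw [h, CharTwo.sub_eq_add]
  simp only [map_add, LinearMap.add_apply]
  linear_combination -(CharTwo.add_self_eq_zero (C x x)) - CharTwo.add_self_eq_zero (C y y)


/-- **Theorem (part 2).** Let `F` be a finite field of characteristic two and `(F, +, *)`
a commutative presemifield.  Then there exist a commutative presemifield `(F, +, ⋆)`
strongly isotopic to `(F, +, *)` (i.e. `L (x * y) = M x ⋆ M y` for some bijective
`𝔽_2`-linear — equivalently additive — maps `L, M`) and a pseudo-planar function
`f : F → F` such that `x ⋆ y = x y + f (x + y) + f x + f y` for all `x y`.  Thus, up to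
isotopism, any commutative semifield of characteristic two can be described by a
pseudo-planar function. -/
theorem commutative_presemifield_strongly_isotopic_pseudoPlanar
    (F : Type*) [Field F] [Fintype F] [CharP F 2]
    (mul : F → F → F)
    (hcomm : ∀ x y : F, mul x y = mul y x)
    (hdistl : ∀ x y z : F, mul (x + y) z = mul x z + mul y z)
    (hdistr : ∀ x y z : F, mul x (y + z) = mul x y + mul x z)
    (hnzd : ∀ x y : F, mul x y = 0 → x = 0 ∨ y = 0) :
    ∃ (smul : F → F → F) (f : F → F) (L M : F →+ F),
      Function.Bijective L ∧ Function.Bijective M ∧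
      -- strong isotopy between `*` and `⋆`
      (∀ x y : F, L (mul x y) = smul (M x) (M y)) ∧
      -- `(F, +, ⋆)` is a commutative presemifield
      (∀ x y : F, smul x y = smul y x) ∧
      (∀ x y z : F, smul (x + y) z = smul x z + smul y z) ∧
      (∀ x y z : F, smul x (y + z) = smul x y + smul x z) ∧
      (∀ x y : F, smul x y = 0 → x = 0 ∨ y = 0) ∧
      -- `f` is pseudo-planar
      (∀ c : F, c ≠ 0 → Function.Bijective fun x => f (x + c) + f x + c * x) ∧
      -- `⋆` is described by `f`
      (∀ x y : F, smul x y = x * y + f (x + y) + f x + f y) := by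
  let Q : F →+ F := AddMonoidHom.mk' (fun x => mul x x) fun x y => by
    rw [hdistl, hdistr, hdistr, hcomm y x]
    linear_combination CharTwo.add_self_eq_zero (mul x y)
  have hQ : Function.Bijective Q := Finite.injective_iff_bijective.mp <|
    (injective_iff_map_eq_zero Q).mpr fun x hx => (hnzd x x hx).elim id id
  let e : F ≃+ F := AddEquiv.ofBijective Q hQ
  let L : F →+ F := (frobenius F 2).toAddMonoidHom.comp e.symm.toAddMonoidHom
  have hLbij : Function.Bijective L :=
    (bijective_frobenius F 2).comp e.symm.bijective
  have hLsq : ∀ x, L (mul x x) = x ^ 2 := fun x =>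
    congrArg (frobenius F 2) (e.symm_apply_apply x)
  let B : F →+ F →+ F := AddMonoidHom.mk' (fun x => AddMonoidHom.mk'
      (fun y => L (mul x y) + x * y) fun y z => by
        rw [hdistr, map_add]; ring) fun x y => by
    ext z
    simp only [AddMonoidHom.mk'_apply, AddMonoidHom.add_apply]
    rw [hdistl, map_add]; ring
  obtain ⟨f, hf⟩ := exists_polarization_eq_of_biadditive B fun x => by
    change L (mul x x) + x * x = 0
    rw [hLsq, sq, CharTwo.add_self_eq_zero]
  have hfL : ∀ x y, L (mul x y) = x * y + f (x + y) + f x + f y := fun x y => by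
    have h : L (mul x y) + x * y = f (x + y) + f x + f y := hf x y
    linear_combination h - CharTwo.add_self_eq_zero (x * y)
  have hLnzd : ∀ x y, L (mul x y) = 0 → x = 0 ∨ y = 0 := fun x y h =>
    hnzd x y ((map_eq_zero_iff L hLbij.injective).mp h)
  refine ⟨fun x y => L (mul x y), f, L, AddMonoidHom.id F, hLbij, Function.bijective_id,
    fun _ _ => rfl, fun x y => congrArg L (hcomm x y),
    fun x y z => by simp only [hdistl, map_add],
    fun x y z => by simp only [hdistr, map_add], hLnzd, fun c hc => ?_, hfL⟩
  refine Finite.injective_iff_bijective.mp fun x y hxy => ?_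
  have hsum : L (mul (x - y) c) = 0 := by
    have h : L (mul x c) = L (mul (x - y) c) + L (mul y c) := by
      rw [← map_add, ← hdistl, sub_add_cancel]
    rw [hfL x c, hfL y c] at h
    linear_combination hxy - h
  exact sub_eq_zero.mp ((hLnzd _ _ hsum).resolve_right hc)
end

section
/- Let F be a finite field of characteristic two, let f : F → F be a pseudo-planar function, and define x * y = xy + f(x+y) + f(x) + f(y). Then (F, +, *) is a presemifield if and only if f is quadratic, i.e. f(x+y+z) + f(x+y) + f(x+z) + f(y+z) + f(x) + f(y) + f(z) = 0 for all x, y, z ∈ F. -/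
/-- **Theorem (part 3).** Let `F` be a finite field of characteristic two, `f : F → F` a
pseudo-planar function, and define `x * y = x y + f (x + y) + f x + f y`.  Then
`(F, +, *)` is a presemifield (left and right distributive, no zero divisors) if and only
if `f` is quadratic, i.e.
`f (x+y+z) + f (x+y) + f (x+z) + f (y+z) + f x + f y + f z = 0` for all `x y z`. -/
theorem presemifield_iff_quadratic_pseudoPlanar_even
    (F : Type*) [Field F] [Fintype F] [CharP F 2]
    (f : F → F)
    (hpp : ∀ c : F, c ≠ 0 → Function.Bijective fun x => f (x + c) + f x + c * x)
    (mul : F → F → F)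
    (hmul : ∀ x y : F, mul x y = x * y + f (x + y) + f x + f y) :
    ((∀ x y z : F, mul (x + y) z = mul x z + mul y z) ∧
     (∀ x y z : F, mul x (y + z) = mul x y + mul x z) ∧
     (∀ x y : F, mul x y = 0 → x = 0 ∨ y = 0)) ↔
    (∀ x y z : F,
      f (x + y + z) + f (x + y) + f (x + z) + f (y + z) + f x + f y + f z = 0) := by
  have h2 : (2 : F) = 0 := CharTwo.two_eq_zero
  constructor
  · rintro ⟨hdistrib, -, -⟩ x y z
    have h := hdistrib x y z
    simp only [hmul] at h
    linear_combination h + (f (x + z) + f (y + z) + f x + f y + f z) * h2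
  · intro hquad
    refine ⟨fun x y z => ?_, fun x y z => ?_, fun x y hxy => ?_⟩
    · simp only [hmul]
      linear_combination hquad x y z - (f (x + z) + f (y + z) + f x + f y + f z) * h2
    · simp only [hmul, ← add_assoc]
      linear_combination hquad x y z - (f (x + y) + f (x + z) + f x + f y + f z) * h2
    · refine or_iff_not_imp_right.mpr fun hy => (hpp y hy).injective ?_
      have h0 : f 0 = 0 := by
        have h := hquad 0 0 0
        simp only [add_zero] at h
        linear_combination h - 3 * f 0 * h2
      rw [hmul] at hxy
      simp only [zero_add, mul_zero, add_zero, h0]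
      linear_combination hxy - f y * h2
end

section
/- Let F be a finite field of odd order and f : F → F any function. Then f is pseudo-planar (i.e. x ↦ f(x+a) − f(x) + ax is a permutation of F for every a ∈ F*) if and only if the function g(x) = x² + 2f(x) is planar (i.e. x ↦ g(x+a) − g(x) is a permutation of F for every a ∈ F*). -/
/-- **Remark.** Let `F` be a finite field of odd order and `f : F → F` any function.
Then `f` is pseudo-planar (i.e. `x ↦ f (x + a) - f x + a x` is a permutation of `F` for
every `a ≠ 0`) if and only if the function `g x = x² + 2 f x` is planar (i.e.
`x ↦ g (x + a) - g x` is a permutation of `F` for every `a ≠ 0`). -/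
theorem pseudoPlanar_iff_planar_odd
    (F : Type*) [Field F] [Fintype F] (hodd : Odd (Fintype.card F))
    (f : F → F) :
    (∀ a : F, a ≠ 0 → Function.Bijective fun x => f (x + a) - f x + a * x) ↔
    (∀ a : F, a ≠ 0 → Function.Bijective fun x =>
      ((x + a) ^ 2 + 2 * f (x + a)) - (x ^ 2 + 2 * f x)) := by
  have h2 : (2 : F) ≠ 0 := Ring.two_ne_zero fun h =>
    Nat.not_even_iff_odd.mpr hodd (Nat.even_iff.mpr (FiniteField.even_card_of_char_two h))
  refine forall₂_congr fun a _ => ?_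
  have key : (fun x => ((x + a) ^ 2 + 2 * f (x + a)) - (x ^ 2 + 2 * f x)) =
      ((Equiv.mulLeft₀ 2 h2).trans (Equiv.addRight (a ^ 2))) ∘
        fun x => f (x + a) - f x + a * x := by
    funext x
    simp only [Function.comp_apply, Equiv.trans_apply, Equiv.mulLeft₀_apply, Equiv.coe_addRight]
    ring
  rw [key, Equiv.comp_bijective]
end

section
/- Let F be a finite field of odd order and let f : F → F be a quadratic pseudo-planar function with f(0) = 0, where quadratic means f(x+y+z) − f(x+y) − f(x+z) − f(y+z) + f(x) + f(y) + f(z) = 0 for all x, y, z ∈ F. Then the product x * y = xy + f(x+y) − f(x) − f(y) makes (F, +, *) a commutative presemifield. -/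
/-- **Remark.** Let `F` be a finite field of odd order and `f : F → F` a quadratic
pseudo-planar function with `f 0 = 0` (quadratic meaning
`f (x+y+z) - f (x+y) - f (x+z) - f (y+z) + f x + f y + f z = 0`).  Then the product
`x * y = x y + f (x + y) - f x - f y` makes `(F, +, *)` a commutative presemifield. -/
theorem commutative_presemifield_of_quadratic_pseudoPlanar_odd
    (F : Type*) [Field F] [Fintype F] (hodd : Odd (Fintype.card F))
    (f : F → F) (hf0 : f 0 = 0)
    (hquad : ∀ x y z : F,
      f (x + y + z) - f (x + y) - f (x + z) - f (y + z) + f x + f y + f z = 0)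
    (hpp : ∀ a : F, a ≠ 0 → Function.Bijective fun x => f (x + a) - f x + a * x)
    (mul : F → F → F)
    (hmul : ∀ x y : F, mul x y = x * y + f (x + y) - f x - f y) :
    (∀ x y : F, mul x y = mul y x) ∧
    (∀ x y z : F, mul (x + y) z = mul x z + mul y z) ∧
    (∀ x y z : F, mul x (y + z) = mul x y + mul x z) ∧
    (∀ x y : F, mul x y = 0 → x = 0 ∨ y = 0) := by
  have hcomm : ∀ x y : F, mul x y = mul y x := fun x y => by
    rw [hmul, hmul, add_comm y x]; ring
  have hadd : ∀ x y z : F, mul (x + y) z = mul x z + mul y z := fun x y z => by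
    rw [hmul, hmul, hmul]
    linear_combination hquad x y z
  refine ⟨hcomm, hadd, fun x y z => ?_, fun x y hxy => ?_⟩
  · rw [hcomm, hadd, hcomm y, hcomm z]
  · refine or_iff_not_imp_right.mpr fun hy => (hpp y hy).injective ?_
    rw [hmul] at hxy
    simp only [zero_add, mul_zero, hf0]
    linear_combination hxy
end
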